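/- Let α > 0, α ≠ 1, let p be the Beta density with parameters a₁ > 0, b₁ > 0 and q the Beta density with parameters a₂ > 0, b₂ > 0, and suppose a_h := a₁ + (α−1)(a₂−1) > 0 and b_h := b₁ + (α−1)(b₂−1) > 0. Then h_α(p;q) = ln B(a₂,b₂) + (1/(1−α)) ln( B(a_h,b_h) / B(a₁,b₁) ), where B(a,b) = ∫_0^1 t^{a−1}(1−t)^{b−1} dt is the Beta function. -/

import Mathlib

open MeasureTheory

/-- The Beta function `B(a,b) = ∫_0^1 t^(a-1) (1-t)^(b-1) dt`. -/
noncomputable def betaFn (a b : ℝ) : ℝ :=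
  ∫ t in Set.Ioo (0 : ℝ) 1, t ^ (a - 1) * (1 - t) ^ (b - 1)

/-- The Beta probability density with parameters `a, b` on `(0,1)`. -/
noncomputable def betaPdf (a b x : ℝ) : ℝ :=
  x ^ (a - 1) * (1 - x) ^ (b - 1) / betaFn a b

/-!
Writing both densities as kernels divided by their normalising constants, the constants factor out
of `∫ p q ^ (α - 1)`, and the logarithm turns the power `B(a₂, b₂) ^ (1 - α)` into
`(1 - α) ln B(a₂, b₂)`. What is left is the integral of one kernel times a power of the other. This
product is again a Beta kernel, because the exponents of `x` and of `1 - x` combine linearly.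
-/

/-- The Rényi cross-entropy `h_α(p; q)` of order `α` of two densities with respect to a reference
measure `μ`. The differential cross-entropy on `(0, 1)` is the case where `μ` is Lebesgue measure
restricted to that interval. It takes the junk value `0` at `α = 1`. -/
noncomputable def renyiCrossEntropy {X : Type*} [MeasurableSpace X] (μ : Measure X) (α : ℝ)
    (p q : X → ℝ) : ℝ :=
  (1 / (1 - α)) * Real.log (∫ x, p x * q x ^ (α - 1) ∂μ)

section Normalization

variable {X : Type*} [MeasurableSpace X] {μ : Measure X} {f g : X → ℝ} {Z W : ℝ}

theorem integral_div_mul_div_rpow (hg : 0 ≤ᵐ[μ] g) (hW : 0 ≤ W) (s : ℝ) :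
    ∫ x, f x / Z * (g x / W) ^ s ∂μ = (∫ x, f x * g x ^ s ∂μ) / Z / W ^ s := by
  rw [div_div, ← integral_div]
  refine integral_congr_ae ?_
  filter_upwards [hg] with x hx
  rw [Real.div_rpow hx hW, div_mul_div_comm]

theorem renyiCrossEntropy_div_const {α : ℝ} (hα : α ≠ 1) (hg : 0 ≤ᵐ[μ] g) (hZ : Z ≠ 0)
    (hW : 0 < W) (hfg : ∫ x, f x * g x ^ (α - 1) ∂μ ≠ 0) :
    renyiCrossEntropy μ α (fun x ↦ f x / Z) (fun x ↦ g x / W) =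
      Real.log W + (1 / (1 - α)) * Real.log ((∫ x, f x * g x ^ (α - 1) ∂μ) / Z) := by
  have hα' : 1 - α ≠ 0 := sub_ne_zero.mpr hα.symm
  rw [renyiCrossEntropy, integral_div_mul_div_rpow hg hW.le,
    Real.log_div (div_ne_zero hfg hZ) (Real.rpow_pos_of_pos hW _).ne', Real.log_rpow hW]
  field_simp
  ring

end Normalization

section BetaFunction

variable {a b : ℝ}

theorem ofReal_betaFn (a b : ℝ) : (betaFn a b : ℂ) = Complex.betaIntegral a b := by
  rw [Complex.betaIntegral, betaFn, intervalIntegral.integral_of_le zero_le_one,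
    integral_Ioc_eq_integral_Ioo, ← integral_complex_ofReal]
  refine setIntegral_congr_fun measurableSet_Ioo fun x ⟨hx₀, hx₁⟩ ↦ ?_
  push_cast [Complex.ofReal_cpow hx₀.le, Complex.ofReal_cpow (sub_nonneg.mpr hx₁.le)]
  rfl

theorem betaFn_eq_beta (ha : 0 < a) (hb : 0 < b) : betaFn a b = ProbabilityTheory.beta a b := by
  rw [ProbabilityTheory.beta_eq_betaIntegralReal a b ha hb, ← ofReal_betaFn, Complex.ofReal_re]

theorem betaFn_pos (ha : 0 < a) (hb : 0 < b) : 0 < betaFn a b :=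
  betaFn_eq_beta ha hb ▸ ProbabilityTheory.beta_pos ha hb

end BetaFunction

theorem rpow_mul_rpow_rpow {y : ℝ} (hy : 0 < y) (c d s : ℝ) :
    y ^ c * (y ^ d) ^ s = y ^ (c + s * d) := by
  rw [← Real.rpow_mul hy.le, ← Real.rpow_add hy, mul_comm d]

/-- The unnormalised Beta density, that is, the integrand of `betaFn a b`. -/
noncomputable def betaKernel (a b x : ℝ) : ℝ :=
  x ^ (a - 1) * (1 - x) ^ (b - 1)

section BetaKernel

variable {x : ℝ}

theorem betaKernel_nonneg (a b : ℝ) (hx : x ∈ Set.Icc (0 : ℝ) 1) : 0 ≤ betaKernel a b x :=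
  mul_nonneg (Real.rpow_nonneg hx.1 _) (Real.rpow_nonneg (sub_nonneg.mpr hx.2) _)

theorem betaKernel_mul_betaKernel_rpow (hx : x ∈ Set.Ioo (0 : ℝ) 1) (a₁ b₁ a₂ b₂ s : ℝ) :
    betaKernel a₁ b₁ x * betaKernel a₂ b₂ x ^ s =
      betaKernel (a₁ + s * (a₂ - 1)) (b₁ + s * (b₂ - 1)) x := by
  have hx' : 0 < 1 - x := sub_pos.mpr hx.2
  simp only [betaKernel]
  rw [Real.mul_rpow (Real.rpow_nonneg hx.1.le _) (Real.rpow_nonneg hx'.le _), mul_mul_mul_comm,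
    rpow_mul_rpow_rpow hx.1, rpow_mul_rpow_rpow hx', add_sub_right_comm, add_sub_right_comm]

theorem setIntegral_betaKernel_mul_betaKernel_rpow (a₁ b₁ a₂ b₂ s : ℝ) :
    ∫ x in Set.Ioo (0 : ℝ) 1, betaKernel a₁ b₁ x * betaKernel a₂ b₂ x ^ s =
      betaFn (a₁ + s * (a₂ - 1)) (b₁ + s * (b₂ - 1)) :=
  setIntegral_congr_fun measurableSet_Ioo fun _ hx ↦
    betaKernel_mul_betaKernel_rpow hx a₁ b₁ a₂ b₂ s

end BetaKernel

theorem renyi_diff_cross_entropy_beta_general {α a₁ b₁ a₂ b₂ : ℝ} (hα : α ≠ 1)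
    (ha₁ : 0 < a₁) (hb₁ : 0 < b₁) (ha₂ : 0 < a₂) (hb₂ : 0 < b₂)
    (ha : 0 < a₁ + (α - 1) * (a₂ - 1)) (hb : 0 < b₁ + (α - 1) * (b₂ - 1)) :
    renyiCrossEntropy (volume.restrict (Set.Ioo 0 1)) α (betaPdf a₁ b₁) (betaPdf a₂ b₂) =
      Real.log (betaFn a₂ b₂) + (1 / (1 - α)) *
        Real.log (betaFn (a₁ + (α - 1) * (a₂ - 1)) (b₁ + (α - 1) * (b₂ - 1)) / betaFn a₁ b₁) := by
  have kernel_integral := setIntegral_betaKernel_mul_betaKernel_rpow a₁ b₁ a₂ b₂ (α - 1)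
  have kernel_nonneg : 0 ≤ᵐ[volume.restrict (Set.Ioo 0 1)] betaKernel a₂ b₂ :=
    ae_restrict_of_forall_mem measurableSet_Ioo fun _ hx ↦
      betaKernel_nonneg a₂ b₂ (Set.Ioo_subset_Icc_self hx)
  rw [← kernel_integral]
  exact renyiCrossEntropy_div_const hα kernel_nonneg (betaFn_pos ha₁ hb₁).ne' (betaFn_pos ha₂ hb₂)
    (kernel_integral ▸ (betaFn_pos ha hb).ne')

/-- Rényi differential cross-entropy between two Beta densities: if `p` has parameters
`a₁, b₁ > 0`, `q` has parameters `a₂, b₂ > 0`, and `a_h := a₁ + (α-1)(a₂-1) > 0`,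
`b_h := b₁ + (α-1)(b₂-1) > 0`, then
`h_α(p;q) = ln B(a₂,b₂) + (1/(1-α)) ln(B(a_h,b_h)/B(a₁,b₁))`. -/
theorem renyi_diff_cross_entropy_beta
    (α : ℝ) (hα : 0 < α) (hα1 : α ≠ 1)
    (a₁ b₁ a₂ b₂ : ℝ) (ha₁ : 0 < a₁) (hb₁ : 0 < b₁) (ha₂ : 0 < a₂) (hb₂ : 0 < b₂)
    (ah bh : ℝ) (hah_def : ah = a₁ + (α - 1) * (a₂ - 1)) (hbh_def : bh = b₁ + (α - 1) * (b₂ - 1))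
    (hah : 0 < ah) (hbh : 0 < bh) :
    (1 / (1 - α)) * Real.log (∫ x in Set.Ioo (0 : ℝ) 1,
        betaPdf a₁ b₁ x * betaPdf a₂ b₂ x ^ (α - 1)) =
      Real.log (betaFn a₂ b₂) + (1 / (1 - α)) * Real.log (betaFn ah bh / betaFn a₁ b₁) := by
  subst hah_def hbh_def
  exact renyi_diff_cross_entropy_beta_general hα1 ha₁ hb₁ ha₂ hb₂ hah hbh
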